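/- (Journé's Lemma in higher parameters, with rectangles.) For each $d \ge 2$ and $0 < \epsilon < 1$ there is a constant $C_{d,\epsilon}$ with the following property. Let $\mathcal{U}$ be a collection of pairwise incomparable dyadic rectangles in $\mathbb{R}^d$ with shadow of finite measure, set $V = \{M\mathbf{1}_{\operatorname{sh}(\mathcal{U})} > \frac{1}{2d}\}$, and for $1 \le j \le d$ define $\operatorname{emb}_j(R) = \sup\{\mu \ge 1 : R_{(1)} \times \cdots \times (\mu R_{(j)}) \times \cdots \times R_{(d)} \subset V\}$. Then for every $\mathcal{U}' \subset \mathcal{U}$, $\sum_{R \in \mathcal{U}'} |R| \prod_{j=1}^{d-1} \operatorname{emb}_j(R)^{-\epsilon} \le C_{d,\epsilon} |\operatorname{sh}(\mathcal{U}')|$. -/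

import Mathlib

open MeasureTheory Set

noncomputable section

/-- The dyadic interval `[j2^k, (j+1)2^k)`. -/
def dI (j k : ℤ) : Set ℝ := Set.Ico ((j:ℝ) * 2 ^ k) (((j:ℝ) + 1) * 2 ^ k)

/-- A dyadic rectangle in `ℝ^d`, encoded by the data `(j_i, k_i)` of its side in each
coordinate. -/
abbrev RectD (d : ℕ) := Fin d → ℤ × ℤ

/-- The dyadic rectangle of `ℝ^d` associated to the data `R`. -/
def rectD {d : ℕ} (R : RectD d) : Set (Fin d → ℝ) :=
  Set.univ.pi fun i => dI (R i).1 (R i).2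

/-- The shadow `⋃_{R ∈ 𝓤} R` of a collection of dyadic rectangles in `ℝ^d`. -/
def shD {d : ℕ} (𝓤 : Set (RectD d)) : Set (Fin d → ℝ) := ⋃ R ∈ 𝓤, rectD R

/-- The concentric dilate by `μ` of the dyadic interval `[j2^k, (j+1)2^k)`. -/
def dilI (μ : ℝ) (j k : ℤ) : Set ℝ :=
  Set.Ico (((j:ℝ) + 1/2) * 2 ^ k - μ * 2 ^ k / 2) (((j:ℝ) + 1/2) * 2 ^ k + μ * 2 ^ k / 2)

/-- The dilate of `rectD R` by `μ` in the coordinate `jc` only. -/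
def rectDilj {d : ℕ} (jc : Fin d) (μ : ℝ) (R : RectD d) : Set (Fin d → ℝ) :=
  Set.univ.pi fun i => if i = jc then dilI μ (R i).1 (R i).2 else dI (R i).1 (R i).2

/-- The superlevel set `{M 1_S > t}` of the strong maximal function of an indicator in
`ℝ^d`. -/
def maxGTd {d : ℕ} (t : ENNReal) (S : Set (Fin d → ℝ)) : Set (Fin d → ℝ) :=
  {x | ∃ u v : Fin d → ℝ, x ∈ Set.univ.pi (fun i => Set.Ioo (u i) (v i)) ∧
    t * volume (Set.univ.pi fun i => Set.Ioo (u i) (v i))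
      < volume (S ∩ Set.univ.pi fun i => Set.Ioo (u i) (v i))}

/-- `emb_j(R)`: the supremum of those `μ ≥ 1` for which the dilate of `R` by `μ` in the `j`th
coordinate only is contained in `V = {M 1_{sh 𝓤} > 1/(2d)}`. -/
noncomputable def embj {d : ℕ} (𝓤 : Set (RectD d)) (jc : Fin d) (R : RectD d) : ℝ :=
  sSup {μ : ℝ | 1 ≤ μ ∧ rectDilj jc μ R ⊆ maxGTd (ENNReal.ofReal (1 / (2 * d))) (shD 𝓤)}


lemma dI_nest {j k j' k' : ℤ} {p : ℝ} (h : p ∈ dI j k) (h' : p ∈ dI j' k') (hk : k ≤ k') :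
    dI j k ⊆ dI j' k' := by
  obtain ⟨m, rfl⟩ : ∃ m : ℕ, k' = k + m := ⟨(k' - k).toNat, by omega⟩
  have hpos : (0:ℝ) < 2 ^ k := by positivity
  have e : (2:ℝ) ^ (k + (m:ℤ)) = 2 ^ m * 2 ^ k := by
    rw [zpow_add₀ (by norm_num), zpow_natCast, mul_comm]
  unfold dI at *
  rw [e] at h' ⊢
  obtain ⟨h1, h2⟩ := h
  obtain ⟨h3, h4⟩ := h'
  have a1 : (j':ℝ) * 2 ^ m < j + 1 := by
    by_contra hc
    push Not at hc
    nlinarith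
  have a2 : (j:ℝ) < (j' + 1) * 2 ^ m := by
    by_contra hc
    push Not at hc
    nlinarith
  have b1 : j' * 2 ^ m < j + 1 := by exact_mod_cast a1
  have b2 : j < (j' + 1) * 2 ^ m := by exact_mod_cast a2
  have c1 : (j':ℝ) * 2 ^ m ≤ j := by exact_mod_cast (Int.lt_add_one_iff.mp b1)
  have c2 : (j:ℝ) + 1 ≤ (j' + 1) * 2 ^ m := by exact_mod_cast (Int.add_one_le_iff.mpr b2)
  apply Set.Ico_subset_Ico
  · nlinarith
  · nlinarith

lemma dI_index {j k j' : ℤ} {p : ℝ} (h : p ∈ dI j k) (h' : p ∈ dI j' k) : j = j' := by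
  have hpos : (0:ℝ) < 2 ^ k := by positivity
  obtain ⟨h1, h2⟩ := h
  obtain ⟨h3, h4⟩ := h'
  have a1 : (j':ℝ) < j + 1 := by
    by_contra hc
    push Not at hc
    nlinarith
  have a2 : (j:ℝ) < j' + 1 := by
    by_contra hc
    push Not at hc
    nlinarith
  have b1 : j' < j + 1 := by exact_mod_cast a1
  have b2 : j < j' + 1 := by exact_mod_cast a2
  omega

lemma dI_anc (j k : ℤ) (m : ℕ) : ∃ q : ℤ, dI j k ⊆ dI q (k + m) := by
  refine ⟨j / 2 ^ m, ?_⟩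
  have hpos : (0:ℝ) < 2 ^ k := by positivity
  have e : (2:ℝ) ^ (k + (m:ℤ)) = 2 ^ m * 2 ^ k := by
    rw [zpow_add₀ (by norm_num), zpow_natCast, mul_comm]
  have hm : (0:ℤ) < 2 ^ m := by positivity
  have b1 : j / 2 ^ m * 2 ^ m ≤ j := Int.ediv_mul_le _ hm.ne'
  have b2 : j + 1 ≤ (j / 2 ^ m + 1) * 2 ^ m := Int.lt_ediv_add_one_mul_self _ hm
  have c1 : ((j / 2 ^ m : ℤ):ℝ) * 2 ^ m ≤ j := by exact_mod_cast b1
  have c2 : (j:ℝ) + 1 ≤ ((j / 2 ^ m : ℤ) + 1) * 2 ^ m := by exact_mod_cast b2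
  unfold dI
  rw [e]
  apply Set.Ico_subset_Ico
  · nlinarith
  · nlinarith

lemma vol_dI (j k : ℤ) : volume (dI j k) = ENNReal.ofReal (2 ^ k) := by
  unfold dI; rw [Real.volume_Ico]; congr 1; ring

lemma vol_rectD {d : ℕ} (R : RectD d) :
    volume (rectD R) = ENNReal.ofReal (∏ i, (2:ℝ) ^ (R i).2) := by
  unfold rectD
  rw [volume_pi_pi, ENNReal.ofReal_prod_of_nonneg (fun i _ => by positivity)]
  simp_rw [vol_dI]

lemma meas_rectD {d : ℕ} (R : RectD d) : MeasurableSet (rectD R) :=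
  MeasurableSet.univ_pi fun _ => measurableSet_Ico

/-- Volume of the image under the map stretching coordinate `j`. -/
lemma vol_stretch {d : ℕ} (j : Fin d) (c b : ℝ) (hc : 0 < c) (A : Set (Fin d → ℝ)) :
    volume ((fun y : Fin d → ℝ => fun i => if i = j then b + c * y i else y i) '' A)
      = ENNReal.ofReal c * volume A := by
  have : (fun y : Fin d → ℝ => fun i => if i = j then b + c * y i else y i) '' A
      = (fun x => (fun i => if i = j then b else 0) + x) ''
        ((Matrix.toLin' (Matrix.diagonal (fun i => if i = j then c else 1))) '' A) := by
    rw [Set.image_image]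
    apply Set.image_congr
    intro y _
    funext i
    simp only [Matrix.toLin'_apply, Matrix.mulVec_diagonal, Pi.add_apply]
    split_ifs <;> simp
  rw [this, Set.image_add_left, measure_preimage_add, Measure.addHaar_image_linearMap]
  congr 2
  rw [LinearMap.det_toLin', Matrix.det_diagonal]
  simp [abs_of_pos hc]

lemma key1 {d : ℕ} (hd : 2 ≤ d) (S : Set (Fin d → ℝ)) (R : RectD d) (j : Fin d) (n : ℕ)
    (hn : ¬ rectDilj j (2 ^ n) R ⊆ maxGTd (ENNReal.ofReal (1 / (2 * d))) S)
    (G : Set (RectD d)) (hGS : ∀ R' ∈ G, rectD R' ⊆ S)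
    (hG : ∀ R' ∈ G, (R j).2 + ((n + 2 : ℕ) : ℤ) ≤ (R' j).2) :
    volume (rectD R ∩ ⋃ R' ∈ G, rectD R') ≤ ENNReal.ofReal (1 / d) * volume (rectD R) := by
  by_contra hcon
  push Not at hcon
  apply hn
  intro x hx
  obtain ⟨q, hq⟩ := dI_anc (R j).1 (R j).2 (n + 2)
  have hd0 : (0:ℝ) < d := by positivity
  obtain ⟨s, hs1, hsd⟩ : ∃ s : ℝ, 1 < s ∧ s ^ d = 4 / 3 :=
    ⟨(4/3 : ℝ) ^ ((1:ℝ) / d), Real.one_lt_rpow (by norm_num) (by positivity), by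
      rw [← Real.rpow_natCast, ← Real.rpow_mul (by norm_num)]
      field_simp
      norm_num⟩
  set k := (R j).2 with hk
  set A := rectD R ∩ ⋃ R' ∈ G, rectD R' with hA
  set m := n + 2 with hm
  have e : (2:ℝ) ^ (k + (m:ℤ)) = 2 ^ m * 2 ^ k := by
    rw [zpow_add₀ (by norm_num), zpow_natCast, mul_comm]
  have em : (2:ℝ) ^ m = 4 * 2 ^ n := by rw [hm, pow_add]; ring
  have h2n : (1:ℝ) ≤ 2 ^ n := one_le_pow₀ (by norm_num)
  have hkp : (0:ℝ) < 2 ^ k := by positivity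
  -- the box
  let u : Fin d → ℝ := fun i => if i = j then q * (2 ^ m * 2 ^ k) - 2 ^ n * 2 ^ k
    else (R i).1 * 2 ^ (R i).2 - (s - 1) * 2 ^ (R i).2
  let v : Fin d → ℝ := fun i => if i = j then (q + 1) * (2 ^ m * 2 ^ k) + 2 ^ n * 2 ^ k
    else ((R i).1 + 1) * 2 ^ (R i).2
  have hqb : (q:ℝ) * (2 ^ m * 2 ^ k) ≤ (R j).1 * 2 ^ k ∧
      (((R j).1 : ℝ) + 1) * 2 ^ k ≤ (q + 1) * (2 ^ m * 2 ^ k) := by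
    unfold dI at hq
    rw [e, Set.Ico_subset_Ico_iff (by nlinarith)] at hq
    exact hq
  have hvol : volume (Set.univ.pi fun i => Set.Ioo (u i) (v i)) ≤
      ENNReal.ofReal (2 * (2 ^ m * ∏ i, (2:ℝ) ^ (R i).2)) := by
    rw [Real.volume_pi_Ioo, ← ENNReal.ofReal_prod_of_nonneg]
    · apply ENNReal.ofReal_le_ofReal
      have hb : ∏ i, (v i - u i) ≤ ∏ i, ((if i = j then 3 / 2 * 2 ^ m else 1) * (s * 2 ^ (R i).2)) := by
        apply Finset.prod_le_prod
        · intro i _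
          by_cases h : i = j
          · simp only [u, v, h, if_true]; rw [em]; nlinarith
          · simp only [u, v, h, if_false]
            have : (0:ℝ) < 2 ^ (R i).2 := by positivity
            nlinarith
        · intro i _
          by_cases h : i = j
          · subst h
            simp only [u, v, if_true, ← hk]; rw [em]
            have : (0:ℝ) < 2 ^ n * 2 ^ k := by positivity
            nlinarith
          · simp only [u, v, h, if_false]
            apply le_of_eq; ring
      refine hb.trans (le_of_eq ?_)
      rw [Finset.prod_mul_distrib, Finset.prod_mul_distrib]
      simp [hsd]
      ring
    · intro i _
      by_cases h : i = j
      · simp only [u, v, h, if_true]; rw [em]; nlinarith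
      · simp only [u, v, h, if_false]
        have : (0:ℝ) < 2 ^ (R i).2 := by positivity
        nlinarith
  refine ⟨u, v, ?_, ?_⟩
  · intro i _
    have hxi := hx i (Set.mem_univ i)
    by_cases h : i = j
    · subst h
      simp only [if_true] at hxi
      obtain ⟨h1, h2⟩ := hxi
      simp only [u, v, if_true]
      rw [← hk] at h1 h2
      constructor <;> nlinarith [hqb.1, hqb.2]
    · simp only [h, if_false] at hxi
      obtain ⟨h1, h2⟩ := hxi
      simp only [u, v, h, if_false]
      have : (0:ℝ) < 2 ^ (R i).2 := by positivity
      constructor <;> nlinarith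
  · -- measure estimate
    set b : ℝ := q * (2 ^ m * 2 ^ k) - 2 ^ m * ((R j).1 * 2 ^ k) with hb
    have himg : (fun y : Fin d → ℝ => fun i => if i = j then b + 2 ^ m * y i else y i) '' A ⊆
        S ∩ Set.univ.pi fun i => Set.Ioo (u i) (v i) := by
      rintro _ ⟨y, ⟨hyR, hyG⟩, rfl⟩
      simp only [Set.mem_iUnion] at hyG
      obtain ⟨R', hR', hyR'⟩ := hyG
      have hyj : y j ∈ Set.Ico (((R j).1:ℝ) * 2 ^ k) (((R j).1 + 1) * 2 ^ k) :=
        hyR j (Set.mem_univ j)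
      have hmp : (0:ℝ) < 2 ^ m := by positivity
      have hfj : b + 2 ^ m * y j ∈ dI q (k + m) := by
        unfold dI
        rw [e]
        constructor <;> nlinarith [hyj.1, hyj.2]
      constructor
      · apply hGS R' hR'
        intro i _
        by_cases h : i = j
        · subst h
          simp only [if_true]
          exact dI_nest (hq (hyR i (Set.mem_univ i))) (hyR' i (Set.mem_univ i)) (hG R' hR') hfj
        · simp only [h, if_false]
          exact hyR' i (Set.mem_univ i)
      · intro i _
        by_cases h : i = j
        · subst h
          simp only [u, v, if_true]
          unfold dI at hfj
          rw [e] at hfj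
          have : (0:ℝ) < 2 ^ n * 2 ^ k := by positivity
          constructor <;> linarith [hfj.1, hfj.2]
        · simp only [u, v, h, if_false]
          have := hyR i (Set.mem_univ i)
          have h0 : (0:ℝ) < 2 ^ (R i).2 := by positivity
          constructor <;> nlinarith [this.1, this.2]
    refine lt_of_lt_of_le ?_ (measure_mono himg)
    rw [vol_stretch j _ _ (by positivity)]
    have hmE : (0:ℝ) < 2 ^ m := by positivity
    calc _ ≤ ENNReal.ofReal (1 / (2 * d)) * ENNReal.ofReal (2 * (2 ^ m * ∏ i, (2:ℝ) ^ (R i).2)) := by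
            gcongr
      _ = ENNReal.ofReal (2 ^ m) * (ENNReal.ofReal (1 / d) * volume (rectD R)) := by
            rw [vol_rectD, ← ENNReal.ofReal_mul (by positivity), ← ENNReal.ofReal_mul (by positivity),
              ← ENNReal.ofReal_mul (by positivity)]
            congr 1
            field_simp
      _ < _ := by
            apply ENNReal.mul_lt_mul_right _ _ hcon
            · simp [hmE]
            · simp

lemma key2 {d : ℕ} (hd : 2 ≤ d) (S : Set (Fin d → ℝ)) (J : Finset (Fin d))
    (hJc : J.card ≤ d - 1) (hJ : ∀ a b, a ∉ J → b ∉ J → a = b)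
    (G : Finset (RectD d)) (hGS : ∀ R ∈ G, rectD R ⊆ S)
    (hinc : ∀ R ∈ G, ∀ R' ∈ G, R ≠ R' → ¬ rectD R ⊆ rectD R') (n : Fin d → ℕ)
    (hn : ∀ R ∈ G, ∀ j ∈ J,
      ¬ rectDilj j (2 ^ n j) R ⊆ maxGTd (ENNReal.ofReal (1 / (2 * d))) S)
    (hk : ∀ R ∈ G, ∀ R' ∈ G, ∀ j ∈ J, (R j).2 < (R' j).2 →
      (R j).2 + ((n j + 2 : ℕ) : ℤ) ≤ (R' j).2) :
    ∑ R ∈ G, (volume (rectD R)).toReal ≤ d * (volume (⋃ R ∈ G, rectD R)).toReal := by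
  let A : RectD d → Fin d → Set (Fin d → ℝ) := fun R j =>
    rectD R ∩ ⋃ R' ∈ {R' | R' ∈ G ∧ (R j).2 < (R' j).2}, rectD R'
  let E : RectD d → Set (Fin d → ℝ) := fun R => rectD R \ ⋃ j ∈ J, A R j
  have hd0 : (0:ℝ) < d := by positivity
  have hAm : ∀ R j, MeasurableSet (A R j) := fun R j =>
    (meas_rectD R).inter (MeasurableSet.biUnion (Set.to_countable _) fun R' _ => meas_rectD R')
  have hEm : ∀ R, MeasurableSet (E R) := fun R =>
    (meas_rectD R).diff (Finset.measurableSet_biUnion J fun j _ => hAm R j)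
  have hfin : ∀ R : RectD d, volume (rectD R) ≠ ⊤ := fun R => by
    rw [vol_rectD]; exact ENNReal.ofReal_ne_top
  have hA : ∀ R ∈ G, ∀ j ∈ J, (volume (A R j)).toReal ≤ 1 / d * (volume (rectD R)).toReal := by
    intro R hR j hj
    have := key1 hd S R j (n j) (hn R hR j hj) {R' | R' ∈ G ∧ (R j).2 < (R' j).2}
      (fun R' h => hGS R' h.1) (fun R' h => hk R hR R' h.1 j hj h.2)
    have h2 := ENNReal.toReal_mono (ENNReal.mul_ne_top ENNReal.ofReal_ne_top (hfin R)) this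
    rwa [ENNReal.toReal_mul, ENNReal.toReal_ofReal (by positivity)] at h2
  have hE : ∀ R ∈ G, (volume (rectD R)).toReal ≤ d * (volume (E R)).toReal := by
    intro R hR
    have hsub : rectD R ⊆ E R ∪ ⋃ j ∈ J, A R j := by
      intro x hx
      by_cases h : x ∈ ⋃ j ∈ J, A R j
      · exact Or.inr h
      · exact Or.inl ⟨hx, h⟩
    have hAf : ∀ j, volume (A R j) ≠ ⊤ := fun j =>
      ne_top_of_le_ne_top (hfin R) (measure_mono inter_subset_left)
    have hEf : volume (E R) ≠ ⊤ := ne_top_of_le_ne_top (hfin R) (measure_mono diff_subset)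
    have h1 : volume (rectD R) ≤ volume (E R) + ∑ j ∈ J, volume (A R j) :=
      (measure_mono hsub).trans ((measure_union_le _ _).trans
        (add_le_add le_rfl (measure_biUnion_finset_le _ _)))
    have hsf : ∑ j ∈ J, volume (A R j) ≠ ⊤ := ENNReal.sum_ne_top.2 fun j _ => hAf j
    have h2 := ENNReal.toReal_mono (ENNReal.add_ne_top.2 ⟨hEf, hsf⟩) h1
    rw [ENNReal.toReal_add hEf hsf, ENNReal.toReal_sum (fun j _ => hAf j)] at h2
    have h3 : ∑ j ∈ J, (volume (A R j)).toReal ≤ (d - 1 : ℝ) * (1 / d * (volume (rectD R)).toReal) := by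
      refine (Finset.sum_le_sum (hA R hR)).trans ?_
      rw [Finset.sum_const, nsmul_eq_mul]
      have : (J.card : ℝ) ≤ d - 1 := by
        have : J.card + 1 ≤ d := by omega
        have : (J.card : ℝ) + 1 ≤ d := by exact_mod_cast this
        linarith
      gcongr
    have h4 : (d:ℝ) * ((d - 1 : ℝ) * (1 / d * (volume (rectD R)).toReal))
        = (d - 1) * (volume (rectD R)).toReal := by field_simp
    have h5 := mul_le_mul_of_nonneg_left (h2.trans (add_le_add le_rfl h3)) hd0.le
    nlinarith
  have hdis : (G : Set (RectD d)).PairwiseDisjoint E := by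
    have hno : ∀ R ∈ G, ∀ R' ∈ G, ∀ x, x ∈ E R → x ∈ E R' → ∀ j ∈ J, ¬ (R j).2 < (R' j).2 := by
      intro R hR R' hR' x hx hx' j hj hlt
      apply hx.2
      simp only [Set.mem_iUnion]
      refine ⟨j, hj, hx.1, ?_⟩
      simp only [Set.mem_iUnion]
      exact ⟨R', ⟨hR', hlt⟩, hx'.1⟩
    have hno2 : ∀ R ∈ G, ∀ R' ∈ G, R ≠ R' → ∀ x, x ∈ E R → x ∈ E R' →
        (∀ i ∉ J, (R i).2 ≤ (R' i).2) → False := by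
      intro R hR R' hR' hne x hx hx' hle
      apply hinc R hR R' hR' hne
      refine Set.pi_mono fun i _ => ?_
      refine dI_nest (hx.1 i (Set.mem_univ i)) (hx'.1 i (Set.mem_univ i)) ?_
      by_cases hi : i ∈ J
      · exact not_lt.1 (hno R' hR' R hR x hx' hx i hi)
      · exact hle i hi
    intro R hR R' hR' hne
    rw [Function.onFun, Set.disjoint_left]
    intro x hx hx'
    by_cases h : ∀ i ∉ J, (R i).2 ≤ (R' i).2
    · exact hno2 R hR R' hR' hne x hx hx' h
    · push Not at h
      obtain ⟨i, hi, hlt⟩ := h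
      refine hno2 R' hR' R hR hne.symm x hx' hx ?_
      intro i' hi'
      rw [hJ i' i hi' hi]
      exact hlt.le
  have hUf : volume (⋃ R ∈ G, rectD R) ≠ ⊤ :=
    ne_top_of_le_ne_top (ENNReal.sum_ne_top.2 fun R (_ : R ∈ G) => hfin R)
      (measure_biUnion_finset_le _ _)
  have hsum : ∑ R ∈ G, (volume (E R)).toReal ≤ (volume (⋃ R ∈ G, rectD R)).toReal := by
    rw [← ENNReal.toReal_sum (fun R _ => ne_top_of_le_ne_top (hfin R) (measure_mono diff_subset)),
      ← measure_biUnion_finset hdis (fun R _ => hEm R)]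
    apply ENNReal.toReal_mono hUf
    exact measure_mono (Set.iUnion₂_mono fun R _ => diff_subset)
  calc _ ≤ ∑ R ∈ G, d * (volume (E R)).toReal := Finset.sum_le_sum hE
    _ = d * ∑ R ∈ G, (volume (E R)).toReal := by rw [Finset.mul_sum]
    _ ≤ _ := by gcongr

lemma emb_level {d : ℕ} (𝓤 : Set (RectD d)) (j : Fin d) (R : RectD d) (ε p : ℝ) (hε : 0 < ε)
    (hp : p = 2 ^ (-ε / 2)) (h0 : embj 𝓤 j R ≠ 0) :
    ∃ n : ℕ, ¬ rectDilj j (2 ^ n) R ⊆ maxGTd (ENNReal.ofReal (1 / (2 * d))) (shD 𝓤) ∧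
      embj 𝓤 j R ^ (-ε) * p ^ 2 ≤ p ^ n * p ^ n := by
  unfold embj at h0 ⊢
  set s := {μ : ℝ | 1 ≤ μ ∧ rectDilj j μ R ⊆ maxGTd (ENNReal.ofReal (1 / (2 * d))) (shD 𝓤)} with hs
  have hbdd : BddAbove s := by
    by_contra h
    exact h0 (Real.sSup_of_not_bddAbove h)
  have hne : s.Nonempty := by
    by_contra h
    rw [Set.not_nonempty_iff_eq_empty] at h
    exact h0 (by rw [h]; exact Real.sSup_empty)
  obtain ⟨μ, hμ⟩ := hne
  have h1 : 1 ≤ sSup s := hμ.1.trans (le_csSup hbdd hμ)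
  obtain ⟨n, hn1, hn2⟩ := exists_nat_pow_near h1 (by norm_num : (1:ℝ) < 2)
  refine ⟨n + 1, ?_, ?_⟩
  · intro hsub
    have : (2:ℝ) ^ (n + 1) ∈ s := ⟨one_le_pow₀ (by norm_num), hsub⟩
    exact absurd (le_csSup hbdd this) (not_le.2 hn2)
  · have hb : sSup s ^ (-ε) ≤ ((2:ℝ) ^ n) ^ (-ε) :=
      Real.rpow_le_rpow_of_nonpos (by positivity) hn1 (by linarith)
    have hpe : ((2:ℝ) ^ n) ^ (-ε) = p ^ n * p ^ n := by
      have : (2:ℝ) ^ (-ε) = p * p := by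
        rw [hp, ← Real.rpow_add (by norm_num)]; ring_nf
      rw [← mul_pow, ← this, ← Real.rpow_natCast, ← Real.rpow_natCast, ← Real.rpow_mul (by norm_num),
        ← Real.rpow_mul (by norm_num), mul_comm]
    rw [hpe] at hb
    calc _ ≤ p ^ n * p ^ n * p ^ 2 := by gcongr
      _ = _ := by ring

theorem stmt_18 (d : ℕ) (hd : 2 ≤ d) (ε : ℝ) (hε : 0 < ε) (hε1 : ε < 1) :
    ∃ C : ℝ, 0 < C ∧ ∀ 𝓤 : Set (RectD d), volume (shD 𝓤) < ⊤ →
      (∀ R ∈ 𝓤, ∀ R' ∈ 𝓤, R ≠ R' → ¬ rectD R ⊆ rectD R') →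
      ∀ 𝓤' ⊆ 𝓤,
      ∑' R : 𝓤', (volume (rectD (R : RectD d))).toReal *
          ∏ j ∈ Finset.univ.filter (fun j : Fin d => (j : ℕ) < d - 1),
            embj 𝓤 j (R : RectD d) ^ (-ε)
        ≤ C * (volume (shD 𝓤')).toReal := by
  classical
  obtain ⟨p, hp⟩ : ∃ p : ℝ, p = 2 ^ (-ε / 2) := ⟨_, rfl⟩
  have hp0 : 0 < p := by rw [hp]; positivity
  have hp1 : p < 1 := by
    rw [hp]; exact Real.rpow_lt_one_of_one_lt_of_neg (by norm_num) (by linarith)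
  let w : ℕ × ℕ → ℝ := fun x => (p ^ 3)⁻¹ * (p ^ x.1 * p ^ x.2)
  have hw0 : ∀ x, 0 < w x := fun x => by positivity
  have hgeo : Summable (fun n : ℕ => p ^ n) := summable_geometric_of_lt_one hp0.le hp1
  have hw : Summable w :=
    (hgeo.mul_of_nonneg hgeo (fun n => by positivity) (fun n => by positivity)).mul_left _
  have hW : 0 < ∑' x, w x := hw.tsum_pos (fun x => (hw0 x).le) (0, 0) (hw0 _)
  have hd0 : (0:ℝ) < d := by positivity
  refine ⟨(∑' x, w x) ^ d * d, by positivity, ?_⟩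
  intro 𝓤 hfin hinc 𝓤' hsub
  set J := Finset.univ.filter (fun j : Fin d => (j : ℕ) < d - 1) with hJdef
  have hJ : ∀ a b, a ∉ J → b ∉ J → a = b := by
    intro a b ha hb
    simp only [hJdef, Finset.mem_filter, Finset.mem_univ, true_and] at ha hb
    ext; omega
  have hJc : J.card ≤ d - 1 := by
    have : J ⊆ Finset.univ.erase ⟨d - 1, by omega⟩ := by
      intro a ha
      simp only [hJdef, Finset.mem_filter, Finset.mem_univ, true_and] at ha
      simp only [Finset.mem_erase, Finset.mem_univ, and_true]
      rintro rfl
      simp at ha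
    refine (Finset.card_le_card this).trans ?_
    rw [Finset.card_erase_of_mem (Finset.mem_univ _)]
    simp
  have hshf : volume (shD 𝓤') ≠ ⊤ :=
    ne_top_of_le_ne_top hfin.ne (measure_mono (Set.biUnion_subset_biUnion_left hsub))
  have hemb0 : ∀ j R, 0 ≤ embj 𝓤 j R := fun j R =>
    Real.sSup_nonneg fun μ hμ => zero_le_one.trans hμ.1
  have hlev : ∀ R j, ∃ n : ℕ, embj 𝓤 j R ≠ 0 →
      ¬ rectDilj j (2 ^ n) R ⊆ maxGTd (ENNReal.ofReal (1 / (2 * d))) (shD 𝓤) ∧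
      embj 𝓤 j R ^ (-ε) * p ^ 2 ≤ p ^ n * p ^ n := by
    intro R j
    by_cases h0 : embj 𝓤 j R = 0
    · exact ⟨0, fun h => absurd h0 h⟩
    · obtain ⟨n, hn⟩ := emb_level 𝓤 j R ε p hε hp h0
      exact ⟨n, fun _ => hn⟩
  choose N hN using hlev
  let lab : RectD d → Fin d → ℕ × ℕ := fun R j =>
    if j ∈ J then (N R j, ((R j).2 % ((N R j + 2 : ℕ) : ℤ)).toNat) else (0, 0)
  -- weight of a rectangle
  have hwt : ∀ R, (∀ j ∈ J, embj 𝓤 j R ≠ 0) →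
      ∏ j ∈ J, embj 𝓤 j R ^ (-ε) ≤ ∏ j, w (lab R j) := by
    intro R hR
    have h1 : ∏ j ∈ J, embj 𝓤 j R ^ (-ε) ≤ ∏ j ∈ J, w (lab R j) := by
      apply Finset.prod_le_prod
      · intro j _; exact Real.rpow_nonneg (hemb0 j R) _
      · intro j hj
        have h2 := (hN R j (hR j hj)).2
        simp only [lab, hj, if_true, w]
        set n := N R j
        have hr : ((R j).2 % ((n + 2 : ℕ) : ℤ)).toNat ≤ n + 1 := by
          have := Int.emod_lt_of_pos (R j).2 (b := ((n + 2 : ℕ) : ℤ)) (by positivity)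
          omega
        set r := ((R j).2 % ((n + 2 : ℕ) : ℤ)).toNat
        have h3 : p ^ (n + 1) ≤ p ^ r := pow_le_pow_of_le_one hp0.le hp1.le hr
        rw [inv_mul_eq_div, le_div_iff₀ (by positivity)]
        calc embj 𝓤 j R ^ (-ε) * p ^ 3 = embj 𝓤 j R ^ (-ε) * p ^ 2 * p := by ring
          _ ≤ p ^ n * p ^ n * p := by gcongr
          _ = p ^ n * p ^ (n + 1) := by ring
          _ ≤ _ := by gcongr
    refine h1.trans ?_
    rw [← Finset.prod_mul_prod_compl J]
    apply le_mul_of_one_le_right (Finset.prod_nonneg fun j _ => (hw0 _).le)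
    have : ∀ j ∈ Jᶜ, w (lab R j) = (p ^ 3)⁻¹ := by
      intro j hj
      rw [Finset.mem_compl] at hj
      simp [lab, hj, w]
    rw [Finset.prod_congr rfl this, Finset.prod_const]
    exact one_le_pow₀ ((one_le_inv₀ (by positivity)).2 (pow_le_one₀ hp0.le hp1.le))
  -- bound for finite sums
  have hmain : ∀ F : Finset (RectD d), (∀ R ∈ F, R ∈ 𝓤') →
      ∑ R ∈ F, (volume (rectD R)).toReal * ∏ j ∈ J, embj 𝓤 j R ^ (-ε)
        ≤ (∑' x, w x) ^ d * d * (volume (shD 𝓤')).toReal := by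
    intro F hF
    let F' := F.filter (fun R => ∀ j ∈ J, embj 𝓤 j R ≠ 0)
    have e1 : ∑ R ∈ F, (volume (rectD R)).toReal * ∏ j ∈ J, embj 𝓤 j R ^ (-ε)
        = ∑ R ∈ F', (volume (rectD R)).toReal * ∏ j ∈ J, embj 𝓤 j R ^ (-ε) := by
      symm
      apply Finset.sum_subset (Finset.filter_subset _ _)
      intro R hR hR'
      simp only [F', Finset.mem_filter, not_and] at hR'
      have := hR' hR
      push Not at this
      obtain ⟨j, hj, h0⟩ := this
      rw [Finset.prod_eq_zero hj, mul_zero]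
      rw [h0, Real.zero_rpow (by linarith)]
    rw [e1]
    let T : Finset (ℕ × ℕ) := F'.biUnion fun R => Finset.univ.image (lab R)
    let P : Finset (Fin d → ℕ × ℕ) := Fintype.piFinset fun _ => T
    have hmaps : ∀ R ∈ F', lab R ∈ P := by
      intro R hR
      simp only [P, Fintype.mem_piFinset]
      intro j
      exact Finset.mem_biUnion.2 ⟨R, hR, Finset.mem_image_of_mem _ (Finset.mem_univ j)⟩
    have hclass : ∀ l ∈ P, ∑ R ∈ F' with lab R = l, (volume (rectD R)).toReal
        ≤ d * (volume (shD 𝓤')).toReal := by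
      intro l _
      have hm : ∀ R ∈ F'.filter (fun R => lab R = l),
          R ∈ 𝓤' ∧ (∀ j ∈ J, embj 𝓤 j R ≠ 0) ∧ lab R = l := by
        intro R hR
        simp only [F', Finset.mem_filter] at hR
        exact ⟨hF R hR.1.1, hR.1.2, hR.2⟩
      have hl : ∀ R ∈ F'.filter (fun R => lab R = l), ∀ j ∈ J, N R j = (l j).1 ∧
          ((R j).2 % ((N R j + 2 : ℕ) : ℤ)).toNat = (l j).2 := by
        intro R hR j hj
        have := congrFun (hm R hR).2.2 j
        simp only [lab, hj, if_true] at this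
        rw [← this]
        exact ⟨rfl, rfl⟩
      have := key2 hd (shD 𝓤) J hJc hJ (F'.filter (fun R => lab R = l))
        (fun R hR => Set.subset_biUnion_of_mem (u := rectD) (hsub (hm R hR).1))
        (fun R hR R' hR' => hinc R (hsub (hm R hR).1) R' (hsub (hm R' hR').1))
        (fun j => (l j).1)
        (fun R hR j hj => by
          rw [← (hl R hR j hj).1]
          exact (hN R j ((hm R hR).2.1 j hj)).1)
        (fun R hR R' hR' j hj hlt => by
          obtain ⟨a1, a2⟩ := hl R hR j hj
          obtain ⟨b1, b2⟩ := hl R' hR' j hj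
          rw [a1] at a2
          rw [b1] at b2
          have hpos : (0:ℤ) < (((l j).1 + 2 : ℕ) : ℤ) := by positivity
          set M : ℤ := (((l j).1 + 2 : ℕ) : ℤ)
          have c1 := Int.emod_nonneg (R j).2 hpos.ne'
          have c2 := Int.emod_nonneg (R' j).2 hpos.ne'
          have hmod : (R j).2 % M = (R' j).2 % M := by omega
          have hdvd : M ∣ (R' j).2 - (R j).2 := Int.ModEq.dvd hmod
          have := Int.le_of_dvd (by omega) hdvd
          omega)
      refine this.trans ?_
      gcongr
      exact Set.iUnion₂_subset fun R hR => Set.subset_biUnion_of_mem (u := rectD) (hm R hR).1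
    calc _ ≤ ∑ R ∈ F', (volume (rectD R)).toReal * ∏ j, w (lab R j) := by
            apply Finset.sum_le_sum
            intro R hR
            have := hwt R (Finset.mem_filter.1 hR).2
            gcongr
      _ = ∑ l ∈ P, ∑ R ∈ F' with lab R = l, (volume (rectD R)).toReal * ∏ j, w (lab R j) :=
            (Finset.sum_fiberwise_of_maps_to hmaps _).symm
      _ = ∑ l ∈ P, (∏ j, w (l j)) * ∑ R ∈ F' with lab R = l, (volume (rectD R)).toReal := by
            apply Finset.sum_congr rfl
            intro l _
            rw [Finset.mul_sum]
            apply Finset.sum_congr rfl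
            intro R hR
            rw [(Finset.mem_filter.1 hR).2, mul_comm]
      _ ≤ ∑ l ∈ P, (∏ j, w (l j)) * (d * (volume (shD 𝓤')).toReal) := by
            apply Finset.sum_le_sum
            intro l hl
            exact mul_le_mul_of_nonneg_left (hclass l hl) (Finset.prod_nonneg fun j _ => (hw0 _).le)
      _ = (∑ x ∈ T, w x) ^ d * (d * (volume (shD 𝓤')).toReal) := by
            rw [← Finset.sum_mul]
            congr 1
            rw [← Finset.prod_univ_sum (fun _ : Fin d => T) (fun _ x => w x)]
            simp
      _ ≤ (∑' x, w x) ^ d * (d * (volume (shD 𝓤')).toReal) := by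
            have h1 : ∑ x ∈ T, w x ≤ ∑' x, w x := hw.sum_le_tsum T fun x _ => (hw0 x).le
            have h2 : 0 ≤ ∑ x ∈ T, w x := Finset.sum_nonneg fun x _ => (hw0 x).le
            gcongr
      _ = _ := by ring
  apply tsum_le_of_sum_le' (by positivity)
  intro s
  have := hmain (s.map (Function.Embedding.subtype _)) (by
    intro R hR
    simp only [Finset.mem_map] at hR
    obtain ⟨a, _, rfl⟩ := hR
    exact a.2)
  rw [Finset.sum_map] at this
  exact this
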